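/- For every n ≥ 1 there exist constants C₁, C₂ > 0 depending only on n such that for all weakly decreasing λ, x ∈ ℝⁿ one has C₁·e^{⟨λ,x⟩}·V(λ)·V(x) ≤ A(λ,x)·∏_{1≤i<j≤n}(1+(λ_i−λ_j)(x_i−x_j)) ≤ C₂·e^{⟨λ,x⟩}·V(λ)·V(x). (Equivalently, for strictly decreasing λ, x the spherical function satisfies ψ_λ(x) ≍ e^{⟨λ,x⟩}/∏_{1≤i<j≤n}(1+(λ_i−λ_j)(x_i−x_j)) with constants depending only on n.) -/

import Mathlib

open Finset

/-- The alternating sum `A(ξ,x) = ∑_{σ ∈ Sₙ} sgn(σ) · exp(∑_k ξ_{σ(k)} x_k)`. -/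
noncomputable def altSum {n : ℕ} (ξ x : Fin n → ℝ) : ℝ :=
  ∑ σ : Equiv.Perm (Fin n), ((Equiv.Perm.sign σ : ℤ) : ℝ) * Real.exp (∑ k, ξ (σ k) * x k)

/-- The Vandermonde product `V(x) = ∏_{1 ≤ i < j ≤ n} (x_i − x_j)`. -/
def vand {n : ℕ} (x : Fin n → ℝ) : ℝ :=
  ∏ i : Fin n, ∏ j ∈ Finset.Ioi i, (x i - x j)

/-!
Adding a constant to all `x_k` multiplies both sides by the same exponential, so one may take the
last coordinate of `x` to be `0` and write `x = (z, 0)`. Subtracting consecutive rows of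
`det (e^{λ_i x_j})` then gives `A(λ,x) = ∏ z_j · ∫ A(y,z) dy` over all `y` interlacing `λ`, and by
induction `A(y,z) ≍ V(z) e^{⟨y,z⟩} ∏_{i<j} (y_i - y_j) / (1 + (z_i - z_j) (y_i - y_j))`. The factor
`e^{-(λ_j - y_j) z_j}` confines `y_j` to distance `w_j ≈ min (λ_j - λ_{j+1}) z_j⁻¹` below `λ_j`, so
the integral is comparable to
`e^{⟨λ,x⟩} ∏ w_j ∏_{i<j} (λ_i - λ_j + w_j) / (1 + (z_i - z_j) (λ_i - λ_j + w_j))`. An exchange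
inequality for `u ↦ u / (1 + a u)`, applied to each pair `i < j`, turns this product into the one
for `(λ, x)`.
-/

open MeasureTheory

section PairProducts

variable {M : Type*} [CommMonoid M] {n : ℕ}

lemma prod_Ioi_castSucc (f : Fin (n + 1) → M) (i : Fin n) :
    ∏ j ∈ Ioi i.castSucc, f j = (∏ j ∈ Ioi i, f j.castSucc) * f (Fin.last n) := by
  simp [← filter_lt_eq_Ioi, prod_filter, Fin.prod_univ_castSucc, Fin.castSucc_lt_last]

lemma prod_Ioi_castSucc_eq_mul_prod_succ (f : Fin (n + 1) → M) (i : Fin n) :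
    ∏ j ∈ Ioi i.castSucc, f j = f i.succ * ∏ j ∈ Ioi i, f j.succ := by
  rw [mul_prod_Ioi_eq_prod_Ici (f := fun j : Fin n => f j.succ) i]
  simp [← filter_lt_eq_Ioi, ← filter_le_eq_Ici, prod_filter, Fin.prod_univ_succ]

lemma prod_prod_Ioi_castSucc (f : Fin (n + 1) → Fin (n + 1) → M) :
    ∏ i, ∏ j ∈ Ioi i, f i j =
      (∏ i : Fin n, ∏ j ∈ Ioi i, f i.castSucc j.castSucc) *
        ∏ i : Fin n, f i.castSucc (Fin.last n) := by
  simp [Fin.prod_univ_castSucc, prod_Ioi_castSucc, prod_mul_distrib, ← Fin.top_eq_last]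

lemma prod_prod_Ioi_eq_prod_pow (c : Fin n → M) :
    ∏ i, ∏ j ∈ Ioi i, c j = ∏ j, c j ^ (j : ℕ) := by
  rw [prod_comm' (t' := univ) (s' := Iio) (by simp)]
  simp

lemma prod_pow_val_eq_pow_choose_two (n : ℕ) (c : M) :
    ∏ j : Fin n, c ^ (j : ℕ) = c ^ n.choose 2 := by
  rw [prod_pow_eq_pow_sum, Fin.sum_univ_eq_sum_range (fun j => j), sum_range_id,
    Nat.choose_two_right]

variable {R : Type*} [CommSemiring R] [PartialOrder R] [IsOrderedRing R] {f g : Fin n → Fin n → R}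

lemma prod_prod_Ioi_nonneg (hf : ∀ i j, i < j → 0 ≤ f i j) : 0 ≤ ∏ i, ∏ j ∈ Ioi i, f i j :=
  prod_nonneg fun i _ => prod_nonneg fun j hj => hf i j (mem_Ioi.1 hj)

lemma prod_prod_Ioi_le_prod_pow_mul {c : Fin n → R} (hf : ∀ i j, i < j → 0 ≤ f i j)
    (hfg : ∀ i j, i < j → f i j ≤ c j * g i j) :
    ∏ i, ∏ j ∈ Ioi i, f i j ≤ (∏ j, c j ^ (j : ℕ)) * ∏ i, ∏ j ∈ Ioi i, g i j := by
  simp only [← prod_prod_Ioi_eq_prod_pow, ← prod_mul_distrib]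
  exact prod_le_prod (fun i _ => prod_nonneg fun j hj => hf i j (mem_Ioi.1 hj)) fun i _ =>
    prod_le_prod (fun j hj => hf i j (mem_Ioi.1 hj)) fun j hj => hfg i j (mem_Ioi.1 hj)

lemma prod_prod_Ioi_le_pow_choose_two_mul {c : R} (hf : ∀ i j, i < j → 0 ≤ f i j)
    (hfg : ∀ i j, i < j → f i j ≤ c * g i j) :
    ∏ i, ∏ j ∈ Ioi i, f i j ≤ c ^ n.choose 2 * ∏ i, ∏ j ∈ Ioi i, g i j := by
  simpa only [prod_pow_val_eq_pow_choose_two] using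
    prod_prod_Ioi_le_prod_pow_mul (c := fun _ => c) hf hfg

end PairProducts

section Satur

/-- The saturation `u ↦ u / (1 + a u)`, increasing and concave on `u ≥ 0` for `a ≥ 0`, and
comparable there to `min u a⁻¹`. -/
noncomputable def satur (a u : ℝ) : ℝ := u / (1 + a * u)

variable {a b c d u v : ℝ}

lemma satur_zero_right (a : ℝ) : satur a 0 = 0 := zero_div _

lemma satur_pos (ha : 0 ≤ a) (hu : 0 < u) : 0 < satur a u := by
  unfold satur; positivity

lemma satur_nonneg (ha : 0 ≤ a) (hu : 0 ≤ u) : 0 ≤ satur a u := by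
  unfold satur; positivity

lemma satur_mul_one_add (ha : 0 ≤ a) (hu : 0 ≤ u) : satur a u * (1 + a * u) = u :=
  div_mul_cancel₀ u (by positivity)

lemma satur_le_self (ha : 0 ≤ a) (hu : 0 ≤ u) : satur a u ≤ u :=
  div_le_self hu (le_add_of_nonneg_right (mul_nonneg ha hu))

lemma mul_satur_le_one (ha : 0 ≤ a) (hu : 0 ≤ u) : a * satur a u ≤ 1 := by
  rw [satur, ← mul_div_assoc, div_le_one (by positivity)]
  linarith

lemma satur_le_mul_satur (ha : 0 ≤ a) (hu : 0 ≤ u) (hv : 0 ≤ v) (hc : 1 ≤ c) (h : u ≤ c * v) :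
    satur a u ≤ c * satur a v := by
  rw [satur, satur, ← mul_div_assoc, div_le_div_iff₀ (by positivity) (by positivity)]
  calc u * (1 + a * v) = u + u * (a * v) := by ring
    _ ≤ c * v + c * u * (a * v) := by gcongr; exact le_mul_of_one_le_left hu hc
    _ = c * v * (1 + a * u) := by ring

lemma le_one_add_mul_satur (ha : 0 ≤ a) (hu : 0 ≤ u) (huv : u ≤ v) :
    u ≤ (1 + a * u) * satur a v := by
  calc u = (1 + a * u) * satur a u := by rw [mul_comm, satur_mul_one_add ha hu]
    _ ≤ (1 + a * u) * satur a v := by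
      gcongr
      simpa using satur_le_mul_satur ha hu (hu.trans huv) le_rfl (by simpa using huv)

lemma satur_add_satur (ha : 0 ≤ a) (hb : 0 ≤ b) (hu : 0 ≤ u) (hd : 0 ≤ d) :
    satur a (u + satur b d) = (u + d + u * b * d) / (1 + b * d + a * (u + d + u * b * d)) := by
  have : 0 < 1 + b * d := by positivity
  unfold satur
  field_simp
  ring_nf

-- In both exchange inequalities, clearing denominators leaves a difference of the two sides that
-- is a polynomial with nonnegative coefficients.
lemma satur_add_satur_mul_satur_le (ha : 0 ≤ a) (hb : 0 ≤ b) (hu : 0 ≤ u) (hd : 0 ≤ d) :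
    satur a (u + satur b d) * satur (a + b) u ≤ 2 * (satur a u * satur (a + b) (u + d)) := by
  rw [satur_add_satur ha hb hu hd]
  unfold satur
  rw [div_mul_div_comm, div_mul_div_comm, ← mul_div_assoc,
    div_le_div_iff₀ (by positivity) (by positivity), ← sub_nonneg]
  ring_nf
  positivity

lemma satur_mul_satur_add_le (ha : 0 ≤ a) (hb : 0 ≤ b) (hu : 0 ≤ u) (hd : 0 ≤ d) :
    satur a u * satur (a + b) (u + d) ≤ 2 * (satur a (u + satur b d) * satur (a + b) u) := by
  rw [satur_add_satur ha hb hu hd]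
  unfold satur
  rw [div_mul_div_comm, div_mul_div_comm, ← mul_div_assoc,
    div_le_div_iff₀ (by positivity) (by positivity), ← sub_nonneg]
  ring_nf
  positivity

lemma continuousOn_one_div_one_add_mul_sq (ha : 0 ≤ a) :
    ContinuousOn (fun t => 1 / (1 + a * (v - t)) ^ 2) (Set.Icc u v) := by
  refine ContinuousOn.div (by fun_prop) (by fun_prop) fun t ht => ?_
  have := mul_nonneg ha (sub_nonneg.2 ht.2)
  positivity

lemma integral_one_div_one_add_mul_sq (ha : 0 ≤ a) (h : u ≤ v) :
    ∫ t in Set.Icc u v, 1 / (1 + a * (v - t)) ^ 2 = satur a (v - u) := by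
  have hderiv : ∀ t ∈ Set.uIcc u v, HasDerivAt (fun t => -satur a (v - t))
      (1 / (1 + a * (v - t)) ^ 2) t := by
    intro t ht
    rw [Set.uIcc_of_le h] at ht
    have hpos : 0 < 1 + a * (v - t) := by
      have := mul_nonneg ha (sub_nonneg.2 ht.2)
      positivity
    have hsub : HasDerivAt (fun t => v - t) (-1) t := (hasDerivAt_id t).const_sub v
    refine (hsub.div ((hsub.const_mul a).const_add 1) hpos.ne').neg.congr_deriv ?_
    field_simp
    ring
  rw [integral_Icc_eq_integral_Ioc, ← intervalIntegral.integral_of_le h,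
    intervalIntegral.integral_eq_sub_of_hasDerivAt hderiv
      ((continuousOn_one_div_one_add_mul_sq ha).intervalIntegrable_of_Icc h)]
  simp [satur_zero_right]

end Satur

lemma exp_neg_mul_one_add_pow_le (n : ℕ) {s : ℝ} (hs : 0 ≤ s) :
    Real.exp (-s) * (1 + s) ^ n ≤ (n + 2).factorial * Real.exp 1 * (1 / (1 + s) ^ 2) := by
  have hpow : (1 + s) ^ (n + 2) ≤ (n + 2).factorial * Real.exp (1 + s) := by
    rw [← div_le_iff₀' (by positivity)]
    exact Real.pow_div_factorial_le_exp (1 + s) (by positivity) (n + 2)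
  rw [mul_one_div, le_div_iff₀ (by positivity)]
  calc Real.exp (-s) * (1 + s) ^ n * (1 + s) ^ 2
      = Real.exp (-s) * (1 + s) ^ (n + 2) := by ring
    _ ≤ Real.exp (-s) * ((n + 2).factorial * Real.exp (1 + s)) := by gcongr
    _ = (n + 2).factorial * (Real.exp (-s) * Real.exp (1 + s)) := by ring
    _ = (n + 2).factorial * Real.exp 1 := by rw [← Real.exp_add]; ring_nf

section Determinants

lemma det_eq_det_sub_succ_of_last_column_eq_one {R : Type*} [CommRing R] {n : ℕ}
    (M : Matrix (Fin (n + 1)) (Fin (n + 1)) R) (hM : ∀ i, M i (Fin.last n) = 1) :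
    M.det = (Matrix.of fun i j : Fin n =>
      M i.castSucc j.castSucc - M i.succ j.castSucc).det := by
  let B : Matrix (Fin (n + 1)) (Fin (n + 1)) R :=
    Matrix.of (Fin.cons (M 0) fun i j => M i.succ j - M i.castSucc j)
  have hMB : M.det = B.det :=
    Matrix.det_eq_of_forall_row_eq_smul_add_pred (fun _ => 1) (by simp [B]) (by simp [B])
  have hminor : B.submatrix Fin.succ Fin.castSucc =
      -Matrix.of fun i j : Fin n => M i.castSucc j.castSucc - M i.succ j.castSucc := by
    ext i j
    simp [B]
  rw [hMB, Matrix.det_succ_column B (Fin.last n), Fin.sum_univ_succ,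
    sum_eq_zero fun i _ => by simp [B, hM]]
  simp only [Fin.succAbove_zero, Fin.succAbove_last, hminor, Matrix.det_neg]
  simp [B, hM, ← mul_assoc, ← mul_pow]

lemma integral_det {ι 𝕜 : Type*} [Fintype ι] [DecidableEq ι] [RCLike 𝕜] {E : ι → Type*}
    [∀ i, MeasurableSpace (E i)] (μ : ∀ i, Measure (E i)) [∀ i, SigmaFinite (μ i)]
    (f : ∀ i, ι → E i → 𝕜) (hf : ∀ i j, Integrable (f i j) (μ i)) :
    ∫ y, (Matrix.of fun i j => f i j (y i)).det ∂Measure.pi μ =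
      (Matrix.of fun i j => ∫ t, f i j t ∂μ i).det := by
  simp_rw [← Matrix.det_transpose (Matrix.of _), Matrix.det_apply', Matrix.transpose_apply,
    Matrix.of_apply]
  rw [integral_finsetSum _ fun σ _ =>
    (Integrable.fintype_prod_dep fun i => hf i (σ i)).const_mul _]
  simp_rw [integral_const_mul, integral_fintype_prod_eq_prod]

lemma volume_restrict_Icc_pi {ι : Type*} [Fintype ι] (a b : ι → ℝ) :
    volume.restrict (Set.Icc a b) = Measure.pi fun i => volume.restrict (Set.Icc (a i) (b i)) := by
  rw [← Set.pi_univ_Icc, volume_pi, Measure.restrict_pi_pi]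

lemma mul_integral_exp_mul_Icc {a b : ℝ} (z : ℝ) (h : a ≤ b) :
    z * ∫ t in Set.Icc a b, Real.exp (t * z) = Real.exp (b * z) - Real.exp (a * z) := by
  have hderiv : ∀ t ∈ Set.uIcc a b,
      HasDerivAt (fun t => Real.exp (t * z)) (z * Real.exp (t * z)) t := fun t _ => by
    simpa [mul_comm] using ((hasDerivAt_id t).mul_const z).exp
  rw [integral_Icc_eq_integral_Ioc, ← intervalIntegral.integral_of_le h,
    ← intervalIntegral.integral_const_mul, intervalIntegral.integral_eq_sub_of_hasDerivAt hderiv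
      (Continuous.intervalIntegrable (by fun_prop) _ _)]

end Determinants

section AltSum

variable {n : ℕ}

lemma altSum_eq_det (ξ x : Fin n → ℝ) :
    altSum ξ x = (Matrix.of fun i j => Real.exp (ξ i * x j)).det := by
  simp [altSum, Matrix.det_apply', Real.exp_sum]

lemma altSum_add_const (ξ x : Fin n → ℝ) (c : ℝ) :
    altSum ξ (fun k => x k + c) = Real.exp (c * ∑ k, ξ k) * altSum ξ x := by
  rw [altSum, altSum, mul_sum]
  refine sum_congr rfl fun σ _ => ?_
  rw [mul_left_comm, ← Real.exp_add, ← Equiv.sum_comp σ ξ, mul_sum, ← sum_add_distrib]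
  simp only [mul_add, mul_comm c, add_comm]

lemma integrableOn_altSum (a b z : Fin n → ℝ) :
    IntegrableOn (fun y => altSum y z) (Set.Icc a b) := by
  unfold altSum
  exact Continuous.integrableOn_Icc (by fun_prop)

lemma integral_altSum_Icc (a b z : Fin n → ℝ) :
    ∫ y in Set.Icc a b, altSum y z =
      (Matrix.of fun i j => ∫ t in Set.Icc (a i) (b i), Real.exp (t * z j)).det := by
  simp_rw [altSum_eq_det, volume_restrict_Icc_pi]
  exact integral_det _ (fun _ j t => Real.exp (t * z j))
    fun _ _ => Continuous.integrableOn_Icc (by fun_prop)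

lemma altSum_snoc_zero {lam : Fin (n + 1) → ℝ} (hlam : Antitone lam) (z : Fin n → ℝ) :
    altSum lam (Fin.snoc z 0) =
      (∏ j, z j) * ∫ y in Set.Icc (Fin.tail lam) (Fin.init lam), altSum y z := by
  rw [altSum_eq_det, det_eq_det_sub_succ_of_last_column_eq_one _ (by simp), integral_altSum_Icc,
    ← Matrix.det_mul_row]
  congr 1
  ext i j
  simp [mul_integral_exp_mul_Icc (z j) (hlam (Fin.castSucc_le_succ i)), Fin.init, Fin.tail]

end AltSum

section Vand

variable {n : ℕ}

lemma vand_nonneg {x : Fin n → ℝ} (hx : Antitone x) : 0 ≤ vand x :=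
  prod_prod_Ioi_nonneg fun _ _ hij => sub_nonneg.2 (hx hij.le)

lemma vand_add_const (x : Fin n → ℝ) (c : ℝ) : vand (fun k => x k + c) = vand x := by
  simp [vand]

lemma vand_snoc_zero (z : Fin n → ℝ) :
    vand (Fin.snoc z 0 : Fin (n + 1) → ℝ) = vand z * ∏ j, z j := by
  simp [vand, prod_prod_Ioi_castSucc]

end Vand

section SaturProd

variable {n : ℕ}

/-- The product `∏_{i<j} (λ_i - λ_j) / (1 + (x_i - x_j) (λ_i - λ_j))`. -/
noncomputable def saturProd (lam x : Fin n → ℝ) : ℝ :=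
  ∏ i : Fin n, ∏ j ∈ Ioi i, satur (x i - x j) (lam i - lam j)

/-- The function `e^{⟨λ,x⟩} ∏_{i<j} (λ_i - λ_j) / (1 + (x_i - x_j) (λ_i - λ_j))`, to which
`A(λ,x) / V(x)` turns out to be comparable. -/
noncomputable def expSaturProd (lam x : Fin n → ℝ) : ℝ :=
  Real.exp (∑ k, lam k * x k) * saturProd lam x

variable {lam x : Fin n → ℝ}

lemma saturProd_nonneg (hlam : Antitone lam) (hx : Antitone x) : 0 ≤ saturProd lam x :=
  prod_prod_Ioi_nonneg fun _ _ hij =>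
    satur_nonneg (sub_nonneg.2 (hx hij.le)) (sub_nonneg.2 (hlam hij.le))

lemma expSaturProd_nonneg (hlam : Antitone lam) (hx : Antitone x) : 0 ≤ expSaturProd lam x :=
  mul_nonneg (Real.exp_pos _).le (saturProd_nonneg hlam hx)

lemma expSaturProd_add_const (lam x : Fin n → ℝ) (c : ℝ) :
    expSaturProd lam (fun k => x k + c) = Real.exp (c * ∑ k, lam k) * expSaturProd lam x := by
  simp only [expSaturProd, saturProd, add_sub_add_right_eq_sub]
  rw [← mul_assoc, ← Real.exp_add, mul_sum, ← sum_add_distrib]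
  simp only [mul_add, mul_comm c, add_comm]

lemma expSaturProd_snoc_zero (lam : Fin (n + 1) → ℝ) (z : Fin n → ℝ) :
    expSaturProd lam (Fin.snoc z 0) =
      Real.exp (∑ k, Fin.init lam k * z k) * saturProd lam (Fin.snoc z 0) := by
  simp [expSaturProd, Fin.sum_univ_castSucc, Fin.init]

lemma saturProd_mul_prod (hlam : Antitone lam) (hx : Antitone x) :
    saturProd lam x * ∏ i, ∏ j ∈ Ioi i, (1 + (lam i - lam j) * (x i - x j)) = vand lam := by
  simp only [saturProd, vand, ← prod_mul_distrib]
  refine prod_congr rfl fun i _ => prod_congr rfl fun j hj => ?_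
  have hij := (mem_Ioi.1 hj).le
  rw [mul_comm (lam i - lam j), satur_mul_one_add (sub_nonneg.2 (hx hij)) (sub_nonneg.2 (hlam hij))]

end SaturProd

section Spread

variable {n : ℕ}

/-- The distance `w_j ≈ min (λ_j - λ_{j+1}) z_j⁻¹` below `λ_j` to which the factor
`e^{-(λ_j - y_j) z_j}` confines `y_j ∈ [λ_{j+1}, λ_j]`. -/
noncomputable def width (lam : Fin (n + 1) → ℝ) (z : Fin n → ℝ) (j : Fin n) : ℝ :=
  satur (z j) (lam j.castSucc - lam j.succ)

/-- The set of `y` with each `y_j` at distance between `w_j / 4` and `w_j / 2` below `λ_j`, where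
`w_j` is the width. As `w_j ≤ λ_j - λ_{j+1}`, the coordinates stay well separated on it. -/
def spreadBox (lam : Fin (n + 1) → ℝ) (z : Fin n → ℝ) : Set (Fin n → ℝ) :=
  Set.Icc (fun j => Fin.init lam j - width lam z j / 2) fun j => Fin.init lam j - width lam z j / 4

/-- The typical size of `saturProd y z` when each `y_j` is at distance about `width lam z j` below
`λ_j`. -/
noncomputable def spreadProd (lam : Fin (n + 1) → ℝ) (z : Fin n → ℝ) : ℝ :=
  ∏ i : Fin n, ∏ j ∈ Ioi i,
    satur (z i - z j) (lam i.castSucc - lam j.castSucc + width lam z j)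

variable {lam : Fin (n + 1) → ℝ} {y z : Fin n → ℝ}

lemma sub_succ_nonneg (hlam : Antitone lam) (j : Fin n) : 0 ≤ lam j.castSucc - lam j.succ :=
  sub_nonneg.2 (hlam (Fin.castSucc_le_succ j))

lemma sub_castSucc_nonneg (hlam : Antitone lam) {i j : Fin n} (hij : i < j) :
    0 ≤ lam i.castSucc - lam j.castSucc :=
  sub_nonneg.2 (hlam (Fin.castSucc_le_castSucc_iff.2 hij.le))

lemma castSucc_le_succ_of_lt (hlam : Antitone lam) {i j : Fin n} (hij : i < j) :
    lam j.castSucc ≤ lam i.succ :=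
  hlam (Fin.succ_le_castSucc_iff.2 hij)

lemma antitone_of_mem_Icc (hlam : Antitone lam)
    (hy : y ∈ Set.Icc (Fin.tail lam) (Fin.init lam)) : Antitone y :=
  antitone_iff_forall_lt.2 fun i j hij =>
    (hy.2 j).trans ((castSucc_le_succ_of_lt hlam hij).trans (hy.1 i))

lemma width_nonneg (hlam : Antitone lam) (hz0 : ∀ k, 0 ≤ z k) (j : Fin n) : 0 ≤ width lam z j :=
  satur_nonneg (hz0 j) (sub_succ_nonneg hlam j)

lemma width_le (hlam : Antitone lam) (hz0 : ∀ k, 0 ≤ z k) (j : Fin n) :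
    width lam z j ≤ lam j.castSucc - lam j.succ :=
  satur_le_self (hz0 j) (sub_succ_nonneg hlam j)

lemma satur_add_width_nonneg (hlam : Antitone lam) (hz : Antitone z) (hz0 : ∀ k, 0 ≤ z k)
    {i j : Fin n} (hij : i < j) :
    0 ≤ satur (z i - z j) (lam i.castSucc - lam j.castSucc + width lam z j) :=
  satur_nonneg (sub_nonneg.2 (hz hij.le))
    (add_nonneg (sub_castSucc_nonneg hlam hij) (width_nonneg hlam hz0 j))

lemma spreadProd_nonneg (hlam : Antitone lam) (hz : Antitone z) (hz0 : ∀ k, 0 ≤ z k) :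
    0 ≤ spreadProd lam z :=
  prod_prod_Ioi_nonneg fun _ _ hij => satur_add_width_nonneg hlam hz hz0 hij

lemma spreadBox_subset_Icc (hlam : Antitone lam) (hz0 : ∀ k, 0 ≤ z k) :
    spreadBox lam z ⊆ Set.Icc (Fin.tail lam) (Fin.init lam) :=
  Set.Icc_subset_Icc
    (fun k => by
      simp only [Fin.tail, Fin.init]
      linarith [width_nonneg hlam hz0 k, width_le hlam hz0 k])
    (fun k => by linarith [width_nonneg hlam hz0 k])

lemma volume_real_spreadBox (hlam : Antitone lam) (hz0 : ∀ k, 0 ≤ z k) :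
    volume.real (spreadBox lam z) = (∏ k, width lam z k) / 4 ^ n := by
  rw [measureReal_def, spreadBox, Real.volume_Icc_pi_toReal
    fun k => by linarith [width_nonneg hlam hz0 k]]
  trans ∏ k, width lam z k / 4
  · exact prod_congr rfl fun k _ => by ring
  · simp

end Spread

section Exchange

variable {n : ℕ} {lam : Fin (n + 1) → ℝ} {z : Fin n → ℝ}

lemma saturProd_eq_zero_of_succ_eq (x : Fin (n + 1) → ℝ) {j : Fin n}
    (h : lam j.succ = lam j.castSucc) : saturProd lam x = 0 :=
  prod_eq_zero (mem_univ j.castSucc) <|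
    prod_eq_zero (mem_Ioi.2 Fin.castSucc_lt_succ) (by rw [h, sub_self, satur_zero_right])

lemma prod_width_eq_zero_of_succ_eq (z : Fin n → ℝ) {j : Fin n}
    (h : lam j.succ = lam j.castSucc) : ∏ k, width lam z k = 0 :=
  prod_eq_zero (mem_univ j) (by rw [width, h, sub_self, satur_zero_right])

lemma exists_succ_eq_of_not_strictAnti (hlam : Antitone lam) (hs : ¬ StrictAnti lam) :
    ∃ j : Fin n, lam j.succ = lam j.castSucc := by
  by_contra! hne
  exact hs (Fin.strictAnti_iff_succ_lt.2 fun j =>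
    lt_of_le_of_ne (hlam (Fin.castSucc_le_succ j)) (hne j))

lemma saturProd_snoc_zero (lam : Fin (n + 1) → ℝ) (z : Fin n → ℝ) :
    saturProd lam (Fin.snoc z 0) = saturProd (Fin.init lam) z *
      ∏ i : Fin n, satur (z i) (lam i.castSucc - lam (Fin.last n)) := by
  simp [saturProd, prod_prod_Ioi_castSucc, Fin.init]

lemma prod_width_mul_saturProd_mul (lam : Fin (n + 1) → ℝ) (z : Fin n → ℝ) :
    (∏ j, width lam z j) * (saturProd (Fin.init lam) z *
        ∏ i : Fin n, ∏ j ∈ Ioi i, satur (z i) (lam i.castSucc - lam j.succ)) =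
      saturProd lam (Fin.snoc z 0) *
        ∏ i : Fin n, ∏ j ∈ Ioi i, satur (z i) (lam i.castSucc - lam j.castSucc) := by
  have htelescope : (∏ j, width lam z j) *
        ∏ i : Fin n, ∏ j ∈ Ioi i, satur (z i) (lam i.castSucc - lam j.succ) =
      (∏ i : Fin n, ∏ j ∈ Ioi i, satur (z i) (lam i.castSucc - lam j.castSucc)) *
        ∏ i : Fin n, satur (z i) (lam i.castSucc - lam (Fin.last n)) := by
    simp only [width, ← prod_mul_distrib]
    refine prod_congr rfl fun i _ => ?_
    let f : Fin (n + 1) → ℝ := fun k => satur (z i) (lam i.castSucc - lam k)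
    exact (prod_Ioi_castSucc_eq_mul_prod_succ f i).symm.trans (prod_Ioi_castSucc f i)
  rw [mul_left_comm, htelescope, saturProd_snoc_zero]
  ring

lemma spreadProd_mul_le (hlam : Antitone lam) (hz : Antitone z) (hz0 : ∀ k, 0 ≤ z k) :
    spreadProd lam z * ∏ i : Fin n, ∏ j ∈ Ioi i, satur (z i) (lam i.castSucc - lam j.castSucc) ≤
      2 ^ n.choose 2 * (saturProd (Fin.init lam) z *
        ∏ i : Fin n, ∏ j ∈ Ioi i, satur (z i) (lam i.castSucc - lam j.succ)) := by
  simp only [spreadProd, saturProd, ← prod_mul_distrib]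
  refine prod_prod_Ioi_le_pow_choose_two_mul (fun i j hij => ?_) fun i j hij => ?_
  · exact mul_nonneg (satur_add_width_nonneg hlam hz hz0 hij)
      (satur_nonneg (hz0 i) (sub_castSucc_nonneg hlam hij))
  · simpa only [width, Fin.init, sub_add_cancel, sub_add_sub_cancel] using
      satur_add_satur_mul_satur_le (sub_nonneg.2 (hz hij.le)) (hz0 j)
        (sub_castSucc_nonneg hlam hij) (sub_succ_nonneg hlam j)

lemma le_spreadProd_mul (hlam : Antitone lam) (hz : Antitone z) (hz0 : ∀ k, 0 ≤ z k) :
    saturProd (Fin.init lam) z *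
        ∏ i : Fin n, ∏ j ∈ Ioi i, satur (z i) (lam i.castSucc - lam j.succ) ≤
      2 ^ n.choose 2 * (spreadProd lam z *
        ∏ i : Fin n, ∏ j ∈ Ioi i, satur (z i) (lam i.castSucc - lam j.castSucc)) := by
  simp only [spreadProd, saturProd, ← prod_mul_distrib]
  refine prod_prod_Ioi_le_pow_choose_two_mul (fun i j hij => ?_) fun i j hij => ?_
  · refine mul_nonneg
      (satur_nonneg (sub_nonneg.2 (hz hij.le)) (sub_castSucc_nonneg hlam hij))
      (satur_nonneg (hz0 i) ?_)
    linarith [sub_castSucc_nonneg hlam hij, sub_succ_nonneg hlam j]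
  · simpa only [width, Fin.init, sub_add_cancel, sub_add_sub_cancel] using
      satur_mul_satur_add_le (sub_nonneg.2 (hz hij.le)) (hz0 j)
        (sub_castSucc_nonneg hlam hij) (sub_succ_nonneg hlam j)

lemma prod_satur_sub_castSucc_pos (hlam : StrictAnti lam) (hz0 : ∀ k, 0 ≤ z k) :
    0 < ∏ i : Fin n, ∏ j ∈ Ioi i, satur (z i) (lam i.castSucc - lam j.castSucc) :=
  prod_pos fun i _ => prod_pos fun _ hj => satur_pos (hz0 i) <|
    sub_pos.2 (hlam (Fin.castSucc_lt_castSucc_iff.2 (mem_Ioi.1 hj)))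

lemma prod_width_mul_spreadProd_le (hlam : Antitone lam) (hz : Antitone z) (hz0 : ∀ k, 0 ≤ z k) :
    (∏ j, width lam z j) * spreadProd lam z ≤
      2 ^ n.choose 2 * saturProd lam (Fin.snoc z 0) := by
  by_cases hs : StrictAnti lam
  · refine le_of_mul_le_mul_right ?_ (prod_satur_sub_castSucc_pos hs hz0)
    rw [mul_assoc, mul_assoc, ← prod_width_mul_saturProd_mul, mul_left_comm (2 ^ _)]
    exact mul_le_mul_of_nonneg_left (spreadProd_mul_le hlam hz hz0)
      (prod_nonneg fun j _ => width_nonneg hlam hz0 j)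
  · obtain ⟨j, hj⟩ := exists_succ_eq_of_not_strictAnti hlam hs
    simp [saturProd_eq_zero_of_succ_eq _ hj, prod_width_eq_zero_of_succ_eq z hj]

lemma saturProd_snoc_zero_le (hlam : Antitone lam) (hz : Antitone z) (hz0 : ∀ k, 0 ≤ z k) :
    saturProd lam (Fin.snoc z 0) ≤
      2 ^ n.choose 2 * ((∏ j, width lam z j) * spreadProd lam z) := by
  by_cases hs : StrictAnti lam
  · refine le_of_mul_le_mul_right ?_ (prod_satur_sub_castSucc_pos hs hz0)
    rw [← prod_width_mul_saturProd_mul, mul_assoc, mul_assoc, mul_left_comm (2 ^ _)]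
    exact mul_le_mul_of_nonneg_left (le_spreadProd_mul hlam hz hz0)
      (prod_nonneg fun j _ => width_nonneg hlam hz0 j)
  · obtain ⟨j, hj⟩ := exists_succ_eq_of_not_strictAnti hlam hs
    simp [saturProd_eq_zero_of_succ_eq _ hj, prod_width_eq_zero_of_succ_eq z hj]

end Exchange

section InterlacingIntegral

variable {n : ℕ} {lam : Fin (n + 1) → ℝ} {y z : Fin n → ℝ}

lemma exp_sum_mul_eq (lam : Fin (n + 1) → ℝ) (y z : Fin n → ℝ) :
    Real.exp (∑ k, y k * z k) = Real.exp (∑ k, Fin.init lam k * z k) *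
      ∏ k, Real.exp (-(z k * (Fin.init lam k - y k))) := by
  rw [← Real.exp_sum, ← Real.exp_add, ← sum_add_distrib]
  congr 1
  exact sum_congr rfl fun _ _ => by ring

lemma saturProd_le_prod_pow_mul_spreadProd (hlam : Antitone lam) (hz : Antitone z)
    (hz0 : ∀ k, 0 ≤ z k) (hy : y ∈ Set.Icc (Fin.tail lam) (Fin.init lam)) :
    saturProd y z ≤
      (∏ k, (1 + z k * (Fin.init lam k - y k)) ^ (k : ℕ)) * spreadProd lam z := by
  have hyA := antitone_of_mem_Icc hlam hy
  refine prod_prod_Ioi_le_prod_pow_mul (fun i j hij => ?_) fun i j hij => ?_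
  · exact satur_nonneg (sub_nonneg.2 (hz hij.le)) (sub_nonneg.2 (hyA hij.le))
  · have hj : 0 ≤ Fin.init lam j - y j := sub_nonneg.2 (hy.2 j)
    have hs : 0 ≤ z j * (Fin.init lam j - y j) := mul_nonneg (hz0 j) hj
    have hgap := sub_castSucc_nonneg hlam hij
    have hwidth : Fin.init lam j - y j ≤ (1 + z j * (Fin.init lam j - y j)) * width lam z j :=
      le_one_add_mul_satur (hz0 j) hj (sub_le_sub_left (hy.1 j) _)
    refine satur_le_mul_satur (sub_nonneg.2 (hz hij.le)) (sub_nonneg.2 (hyA hij.le))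
      (add_nonneg hgap (width_nonneg hlam hz0 j)) (le_add_of_nonneg_right hs) ?_
    calc y i - y j
        ≤ (lam i.castSucc - lam j.castSucc) + (Fin.init lam j - y j) := by
          rw [Fin.init_def]
          linarith [show y i ≤ lam i.castSucc from hy.2 i]
      _ ≤ (1 + z j * (Fin.init lam j - y j)) * (lam i.castSucc - lam j.castSucc) +
          (1 + z j * (Fin.init lam j - y j)) * width lam z j :=
          add_le_add (le_mul_of_one_le_left hgap (le_add_of_nonneg_right hs)) hwidth
      _ = _ := (mul_add _ _ _).symm

lemma expSaturProd_le_prod (hlam : Antitone lam) (hz : Antitone z) (hz0 : ∀ k, 0 ≤ z k)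
    (hy : y ∈ Set.Icc (Fin.tail lam) (Fin.init lam)) :
    expSaturProd y z ≤ Real.exp (∑ k, Fin.init lam k * z k) * spreadProd lam z *
      ∏ k : Fin n, (((k : ℕ) + 2).factorial * Real.exp 1 *
        (1 / (1 + z k * (Fin.init lam k - y k)) ^ 2)) := by
  have hs : ∀ k, 0 ≤ z k * (Fin.init lam k - y k) := fun k =>
    mul_nonneg (hz0 k) (sub_nonneg.2 (hy.2 k))
  have hspread := spreadProd_nonneg hlam hz hz0
  calc expSaturProd y z
      ≤ Real.exp (∑ k, y k * z k) *
          ((∏ k, (1 + z k * (Fin.init lam k - y k)) ^ (k : ℕ)) * spreadProd lam z) := by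
        unfold expSaturProd
        gcongr
        exact saturProd_le_prod_pow_mul_spreadProd hlam hz hz0 hy
    _ = Real.exp (∑ k, Fin.init lam k * z k) * spreadProd lam z *
          ∏ k, (Real.exp (-(z k * (Fin.init lam k - y k))) *
            (1 + z k * (Fin.init lam k - y k)) ^ (k : ℕ)) := by
        rw [exp_sum_mul_eq lam y z, prod_mul_distrib]
        ring
    _ ≤ _ := by
        refine mul_le_mul_of_nonneg_left (prod_le_prod (fun k _ => ?_) fun k _ =>
          exp_neg_mul_one_add_pow_le k (hs k)) (by positivity)
        have := hs k
        positivity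

lemma spreadProd_le_saturProd (hlam : Antitone lam) (hz : Antitone z) (hz0 : ∀ k, 0 ≤ z k)
    (hy : y ∈ spreadBox lam z) :
    spreadProd lam z ≤ 4 ^ n.choose 2 * saturProd y z := by
  refine prod_prod_Ioi_le_pow_choose_two_mul
    (fun i j hij => satur_add_width_nonneg hlam hz hz0 hij) fun i j hij => ?_
  have hgap := sub_castSucc_nonneg hlam hij
  have hw := width_nonneg hlam hz0 j
  have hsub : lam i.castSucc - lam j.castSucc + width lam z j ≤ 4 * (y i - y j) := by
    have hyi : lam i.castSucc - width lam z i / 2 ≤ y i := hy.1 i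
    have hyj : y j ≤ lam j.castSucc - width lam z j / 4 := hy.2 j
    linarith [width_le hlam hz0 i, castSucc_le_succ_of_lt hlam hij]
  exact satur_le_mul_satur (sub_nonneg.2 (hz hij.le)) (by positivity) (by linarith)
    (by norm_num) hsub

lemma exp_mul_spreadProd_le_expSaturProd (hlam : Antitone lam) (hz : Antitone z)
    (hz0 : ∀ k, 0 ≤ z k) (hy : y ∈ spreadBox lam z) :
    Real.exp (∑ k, Fin.init lam k * z k) * spreadProd lam z ≤
      Real.exp n * 4 ^ n.choose 2 * expSaturProd y z := by
  have hexp : Real.exp (∑ k, Fin.init lam k * z k) ≤ Real.exp n * Real.exp (∑ k, y k * z k) := by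
    rw [← Real.exp_add, Real.exp_le_exp, ← sub_le_iff_le_add, ← sum_sub_distrib]
    refine (sum_le_card_nsmul univ _ 1 fun k _ => ?_).trans_eq (by simp)
    have hyk : Fin.init lam k - y k ≤ width lam z k := by
      linarith [hy.1 k, width_nonneg hlam hz0 k]
    calc Fin.init lam k * z k - y k * z k = z k * (Fin.init lam k - y k) := by ring
      _ ≤ z k * width lam z k := mul_le_mul_of_nonneg_left hyk (hz0 k)
      _ ≤ 1 := mul_satur_le_one (hz0 k) (sub_succ_nonneg hlam k)
  calc Real.exp (∑ k, Fin.init lam k * z k) * spreadProd lam z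
      ≤ (Real.exp n * Real.exp (∑ k, y k * z k)) * (4 ^ n.choose 2 * saturProd y z) :=
        mul_le_mul hexp (spreadProd_le_saturProd hlam hz hz0 hy) (spreadProd_nonneg hlam hz hz0)
          (by positivity)
    _ = Real.exp n * 4 ^ n.choose 2 * expSaturProd y z := by rw [expSaturProd]; ring

lemma integrableOn_expSaturProd (hlam : Antitone lam) (hz : Antitone z) :
    IntegrableOn (fun y => expSaturProd y z) (Set.Icc (Fin.tail lam) (Fin.init lam)) := by
  refine ContinuousOn.integrableOn_Icc (ContinuousOn.mul (by fun_prop) ?_)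
  refine continuousOn_finsetProd _ fun i _ => continuousOn_finsetProd _ fun j hj => ?_
  refine ContinuousOn.div (by fun_prop) (by fun_prop) fun y hy => ?_
  have hij := (mem_Ioi.1 hj).le
  have := mul_nonneg (sub_nonneg.2 (hz hij))
    (sub_nonneg.2 (antitone_of_mem_Icc hlam hy hij))
  positivity

lemma integral_expSaturProd_le (hlam : Antitone lam) (hz : Antitone z) (hz0 : ∀ k, 0 ≤ z k) :
    ∫ y in Set.Icc (Fin.tail lam) (Fin.init lam), expSaturProd y z ≤
      (∏ k : Fin n, (((k : ℕ) + 2).factorial * Real.exp 1)) * 2 ^ n.choose 2 *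
        expSaturProd lam (Fin.snoc z 0) := by
  let g : Fin n → ℝ → ℝ := fun k t =>
    ((k : ℕ) + 2).factorial * Real.exp 1 * (1 / (1 + z k * (Fin.init lam k - t)) ^ 2)
  have hg : IntegrableOn (fun y => ∏ k, g k (y k)) (Set.Icc (Fin.tail lam) (Fin.init lam)) := by
    rw [IntegrableOn, volume_restrict_Icc_pi]
    exact Integrable.fintype_prod fun k =>
      (continuousOn_one_div_one_add_mul_sq (hz0 k)).integrableOn_Icc.const_mul _
  have hint : ∫ y in Set.Icc (Fin.tail lam) (Fin.init lam), ∏ k, g k (y k) =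
      (∏ k : Fin n, (((k : ℕ) + 2).factorial * Real.exp 1)) * ∏ k, width lam z k := by
    rw [volume_restrict_Icc_pi, integral_fintype_prod_eq_prod, ← prod_mul_distrib]
    refine prod_congr rfl fun k _ => ?_
    have hle : Fin.tail lam k ≤ Fin.init lam k := hlam (Fin.castSucc_le_succ k)
    rw [integral_const_mul, integral_one_div_one_add_mul_sq (hz0 k) hle]
    rfl
  calc ∫ y in Set.Icc (Fin.tail lam) (Fin.init lam), expSaturProd y z
      ≤ ∫ y in Set.Icc (Fin.tail lam) (Fin.init lam),
          Real.exp (∑ k, Fin.init lam k * z k) * spreadProd lam z * ∏ k, g k (y k) :=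
        setIntegral_mono_on (integrableOn_expSaturProd hlam hz) (hg.const_mul _) measurableSet_Icc
          fun y hy => expSaturProd_le_prod hlam hz hz0 hy
    _ = (∏ k : Fin n, (((k : ℕ) + 2).factorial * Real.exp 1)) *
          Real.exp (∑ k, Fin.init lam k * z k) * ((∏ k, width lam z k) * spreadProd lam z) := by
        rw [integral_const_mul, hint]
        ring
    _ ≤ (∏ k : Fin n, (((k : ℕ) + 2).factorial * Real.exp 1)) *
          Real.exp (∑ k, Fin.init lam k * z k) * (2 ^ n.choose 2 * saturProd lam (Fin.snoc z 0)) :=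
        mul_le_mul_of_nonneg_left (prod_width_mul_spreadProd_le hlam hz hz0) (by positivity)
    _ = _ := by
        rw [expSaturProd_snoc_zero]
        ring

lemma exp_mul_prod_width_mul_spreadProd_le_integral (hlam : Antitone lam) (hz : Antitone z)
    (hz0 : ∀ k, 0 ≤ z k) :
    Real.exp (∑ k, Fin.init lam k * z k) * ((∏ k, width lam z k) * spreadProd lam z) ≤
      4 ^ n * (Real.exp n * 4 ^ n.choose 2) *
        ∫ y in Set.Icc (Fin.tail lam) (Fin.init lam), expSaturProd y z := by
  have hint := integrableOn_expSaturProd hlam hz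
  have hsub := spreadBox_subset_Icc hlam hz0
  calc Real.exp (∑ k, Fin.init lam k * z k) * ((∏ k, width lam z k) * spreadProd lam z)
      = 4 ^ n * (Real.exp (∑ k, Fin.init lam k * z k) * spreadProd lam z *
          volume.real (spreadBox lam z)) := by
        rw [volume_real_spreadBox hlam hz0]
        field_simp
    _ ≤ 4 ^ n * ∫ y in spreadBox lam z, Real.exp n * 4 ^ n.choose 2 * expSaturProd y z := by
        gcongr
        exact setIntegral_ge_of_const_le_real measurableSet_Icc isCompact_Icc.measure_ne_top
          (fun y hy => exp_mul_spreadProd_le_expSaturProd hlam hz hz0 hy)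
          ((hint.mono_set hsub).const_mul _)
    _ = 4 ^ n * (Real.exp n * 4 ^ n.choose 2) * ∫ y in spreadBox lam z, expSaturProd y z := by
        rw [integral_const_mul, ← mul_assoc]
    _ ≤ 4 ^ n * (Real.exp n * 4 ^ n.choose 2) *
          ∫ y in Set.Icc (Fin.tail lam) (Fin.init lam), expSaturProd y z := by
        refine mul_le_mul_of_nonneg_left (setIntegral_mono_set hint ?_ hsub.eventuallyLE)
          (by positivity)
        exact ae_restrict_of_forall_mem measurableSet_Icc fun y hy =>
          expSaturProd_nonneg (antitone_of_mem_Icc hlam hy) hz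

lemma expSaturProd_snoc_zero_le_integral (hlam : Antitone lam) (hz : Antitone z)
    (hz0 : ∀ k, 0 ≤ z k) :
    expSaturProd lam (Fin.snoc z 0) ≤ 2 ^ n.choose 2 * (4 ^ n * (Real.exp n * 4 ^ n.choose 2)) *
      ∫ y in Set.Icc (Fin.tail lam) (Fin.init lam), expSaturProd y z := by
  calc expSaturProd lam (Fin.snoc z 0)
      = Real.exp (∑ k, Fin.init lam k * z k) * saturProd lam (Fin.snoc z 0) :=
        expSaturProd_snoc_zero lam z
    _ ≤ Real.exp (∑ k, Fin.init lam k * z k) *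
          (2 ^ n.choose 2 * ((∏ k, width lam z k) * spreadProd lam z)) := by
        gcongr
        exact saturProd_snoc_zero_le hlam hz hz0
    _ = 2 ^ n.choose 2 *
          (Real.exp (∑ k, Fin.init lam k * z k) * ((∏ k, width lam z k) * spreadProd lam z)) :=
        mul_left_comm _ _ _
    _ ≤ 2 ^ n.choose 2 * (4 ^ n * (Real.exp n * 4 ^ n.choose 2) *
          ∫ y in Set.Icc (Fin.tail lam) (Fin.init lam), expSaturProd y z) :=
        mul_le_mul_of_nonneg_left (exp_mul_prod_width_mul_spreadProd_le_integral hlam hz hz0)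
          (by positivity)
    _ = _ := (mul_assoc _ _ _).symm

end InterlacingIntegral

section Induction

variable {n : ℕ}

lemma altSum_snoc_zero_le_of_forall_le {C : ℝ} (hC : 0 ≤ C)
    (hle : ∀ y z : Fin n → ℝ, Antitone y → Antitone z →
      altSum y z ≤ C * (vand z * expSaturProd y z))
    {lam : Fin (n + 1) → ℝ} {z : Fin n → ℝ} (hlam : Antitone lam) (hz : Antitone z)
    (hz0 : ∀ k, 0 ≤ z k) :
    altSum lam (Fin.snoc z 0) ≤
      C * ((∏ k : Fin n, (((k : ℕ) + 2).factorial * Real.exp 1)) * 2 ^ n.choose 2) *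
        (vand (Fin.snoc z 0 : Fin (n + 1) → ℝ) * expSaturProd lam (Fin.snoc z 0)) := by
  have hprod : 0 ≤ ∏ k, z k := prod_nonneg fun k _ => hz0 k
  have hvand := vand_nonneg hz
  calc altSum lam (Fin.snoc z 0)
      = (∏ k, z k) * ∫ y in Set.Icc (Fin.tail lam) (Fin.init lam), altSum y z :=
        altSum_snoc_zero hlam z
    _ ≤ (∏ k, z k) * ∫ y in Set.Icc (Fin.tail lam) (Fin.init lam),
          C * (vand z * expSaturProd y z) :=
        mul_le_mul_of_nonneg_left (setIntegral_mono_on (integrableOn_altSum _ _ z)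
          (((integrableOn_expSaturProd hlam hz).const_mul _).const_mul _) measurableSet_Icc
          fun y hy => hle y z (antitone_of_mem_Icc hlam hy) hz) hprod
    _ = (∏ k, z k) * (C * (vand z *
          ∫ y in Set.Icc (Fin.tail lam) (Fin.init lam), expSaturProd y z)) := by
        rw [integral_const_mul, integral_const_mul]
    _ ≤ (∏ k, z k) * (C * (vand z * ((∏ k : Fin n, (((k : ℕ) + 2).factorial * Real.exp 1)) *
          2 ^ n.choose 2 * expSaturProd lam (Fin.snoc z 0)))) := by
        gcongr ?_ * (?_ * (?_ * ?_))
        exact integral_expSaturProd_le hlam hz hz0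
    _ = _ := by
        rw [vand_snoc_zero]
        ring

lemma le_altSum_snoc_zero_of_forall_le {C : ℝ} (hC : 0 ≤ C)
    (hle : ∀ y z : Fin n → ℝ, Antitone y → Antitone z →
      C * (vand z * expSaturProd y z) ≤ altSum y z)
    {lam : Fin (n + 1) → ℝ} {z : Fin n → ℝ} (hlam : Antitone lam) (hz : Antitone z)
    (hz0 : ∀ k, 0 ≤ z k) :
    C / (2 ^ n.choose 2 * (4 ^ n * (Real.exp n * 4 ^ n.choose 2))) *
        (vand (Fin.snoc z 0 : Fin (n + 1) → ℝ) * expSaturProd lam (Fin.snoc z 0)) ≤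
      altSum lam (Fin.snoc z 0) := by
  have hprod : 0 ≤ ∏ k, z k := prod_nonneg fun k _ => hz0 k
  have hvand := vand_nonneg hz
  rw [div_mul_eq_mul_div, div_le_iff₀ (by positivity)]
  calc C * (vand (Fin.snoc z 0 : Fin (n + 1) → ℝ) * expSaturProd lam (Fin.snoc z 0))
      = (∏ k, z k) * (C * (vand z * expSaturProd lam (Fin.snoc z 0))) := by
        rw [vand_snoc_zero]
        ring
    _ ≤ (∏ k, z k) * (C * (vand z * (2 ^ n.choose 2 * (4 ^ n * (Real.exp n * 4 ^ n.choose 2)) *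
          ∫ y in Set.Icc (Fin.tail lam) (Fin.init lam), expSaturProd y z))) := by
        gcongr ?_ * (?_ * (?_ * ?_))
        exact expSaturProd_snoc_zero_le_integral hlam hz hz0
    _ = (∏ k, z k) * (∫ y in Set.Icc (Fin.tail lam) (Fin.init lam),
          C * (vand z * expSaturProd y z)) *
            (2 ^ n.choose 2 * (4 ^ n * (Real.exp n * 4 ^ n.choose 2))) := by
        rw [integral_const_mul, integral_const_mul]
        ring
    _ ≤ (∏ k, z k) * (∫ y in Set.Icc (Fin.tail lam) (Fin.init lam), altSum y z) *
            (2 ^ n.choose 2 * (4 ^ n * (Real.exp n * 4 ^ n.choose 2))) := by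
        refine mul_le_mul_of_nonneg_right (mul_le_mul_of_nonneg_left ?_ hprod) (by positivity)
        exact setIntegral_mono_on (((integrableOn_expSaturProd hlam hz).const_mul _).const_mul _)
          (integrableOn_altSum _ _ z) measurableSet_Icc
          fun y hy => hle y z (antitone_of_mem_Icc hlam hy) hz
    _ = _ := by rw [altSum_snoc_zero hlam]

lemma exists_eq_snoc_zero_add {x : Fin (n + 1) → ℝ} (hx : Antitone x) :
    ∃ (z : Fin n → ℝ) (c : ℝ), Antitone z ∧ (∀ k, 0 ≤ z k) ∧
      x = fun k => (Fin.snoc z 0 : Fin (n + 1) → ℝ) k + c := by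
  refine ⟨fun k => x k.castSucc - x (Fin.last n), x (Fin.last n),
    fun i j hij => sub_le_sub_right (hx (Fin.castSucc_le_castSucc_iff.2 hij)) _,
    fun k => sub_nonneg.2 (hx (Fin.le_last _)), funext fun k => ?_⟩
  induction k using Fin.lastCases <;> simp

lemma exists_altSum_bounds (n : ℕ) :
    ∃ C₁ C₂ : ℝ, 0 < C₁ ∧ 0 < C₂ ∧ ∀ lam x : Fin n → ℝ, Antitone lam → Antitone x →
      C₁ * (vand x * expSaturProd lam x) ≤ altSum lam x ∧
        altSum lam x ≤ C₂ * (vand x * expSaturProd lam x) := by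
  induction n with
  | zero => exact ⟨1, 1, one_pos, one_pos, by simp [altSum, vand, expSaturProd, saturProd]⟩
  | succ n ih =>
    obtain ⟨C₁, C₂, hC₁, hC₂, hbounds⟩ := ih
    refine ⟨C₁ / (2 ^ n.choose 2 * (4 ^ n * (Real.exp n * 4 ^ n.choose 2))),
      C₂ * ((∏ k : Fin n, (((k : ℕ) + 2).factorial * Real.exp 1)) * 2 ^ n.choose 2),
      by positivity, by positivity, fun lam x hlam hx => ?_⟩
    obtain ⟨z, c, hz, hz0, rfl⟩ := exists_eq_snoc_zero_add hx
    rw [altSum_add_const, vand_add_const, expSaturProd_add_const,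
      mul_left_comm (vand _), mul_left_comm (_ / _), mul_left_comm (_ * _)]
    have hlow := le_altSum_snoc_zero_of_forall_le hC₁.le
      (fun y z hy hz => (hbounds y z hy hz).1) hlam hz hz0
    have hup := altSum_snoc_zero_le_of_forall_le hC₂.le
      (fun y z hy hz => (hbounds y z hy hz).2) hlam hz hz0
    exact ⟨mul_le_mul_of_nonneg_left hlow (Real.exp_pos _).le,
      mul_le_mul_of_nonneg_left hup (Real.exp_pos _).le⟩

end Induction

/-- Sharp estimate for the spherical function of the flat complex symmetric space of
type `A_{n-1}`:  `A(λ,x) · ∏_{i<j} (1 + (λ_i−λ_j)(x_i−x_j)) ≍ e^{⟨λ,x⟩} V(λ) V(x)`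
for weakly decreasing `λ, x`, with constants depending only on `n`. -/
theorem spherical_estimate_An (n : ℕ) (hn : 1 ≤ n) :
    ∃ C₁ C₂ : ℝ, 0 < C₁ ∧ 0 < C₂ ∧
      ∀ lam x : Fin n → ℝ, Antitone lam → Antitone x →
        C₁ * (Real.exp (∑ k, lam k * x k) * vand lam * vand x) ≤
            altSum lam x *
              (∏ i : Fin n, ∏ j ∈ Finset.Ioi i, (1 + (lam i - lam j) * (x i - x j))) ∧
        altSum lam x *
              (∏ i : Fin n, ∏ j ∈ Finset.Ioi i, (1 + (lam i - lam j) * (x i - x j))) ≤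
          C₂ * (Real.exp (∑ k, lam k * x k) * vand lam * vand x) := by
  obtain ⟨C₁, C₂, hC₁, hC₂, hbounds⟩ := exists_altSum_bounds n
  refine ⟨C₁, C₂, hC₁, hC₂, fun lam x hlam hx => ?_⟩
  obtain ⟨hlow, hup⟩ := hbounds lam x hlam hx
  have hnonneg : 0 ≤ ∏ i, ∏ j ∈ Ioi i, (1 + (lam i - lam j) * (x i - x j)) :=
    prod_prod_Ioi_nonneg fun _ _ hij => add_nonneg zero_le_one <|
      mul_nonneg (sub_nonneg.2 (hlam hij.le)) (sub_nonneg.2 (hx hij.le))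
  have hclear : ∀ C, C * (Real.exp (∑ k, lam k * x k) * vand lam * vand x) =
      C * (vand x * expSaturProd lam x) *
        ∏ i, ∏ j ∈ Ioi i, (1 + (lam i - lam j) * (x i - x j)) := fun C => by
    rw [← saturProd_mul_prod hlam hx, expSaturProd]
    ring
  rw [hclear, hclear]
  exact ⟨mul_le_mul_of_nonneg_right hlow hnonneg, mul_le_mul_of_nonneg_right hup hnonneg⟩
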